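/- For distinct atoms p and q, the following formulas are all N-valid: ¬¬p → p; p → ¬¬p; ¬p ∨ ¬¬p; (p → q) ∨ (q → p); (p → q) ∨ (p → ¬q); ¬p → (p → q); ¬(p ∨ ¬p) → q; p → (p ∨ q); and p → (p ∧ p). -/

import Mathlib

/-! ## Dialogical logic: formulas, statements, moves -/

/-- Propositional formulas, built from atoms (indexed by `ℕ`) and `¬`, `∧`, `∨`, `→`. -/
inductive Formula : Type
  | atom : ℕ → Formula
  | neg : Formula → Formula
  | conj : Formula → Formula → Formula
  | disj : Formula → Formula → Formula
  | impl : Formula → Formula → Formula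
  deriving DecidableEq, Inhabited

/-- Statements: formulas together with the three symbolic attacks `∧_L`, `∧_R` and `?`. -/
inductive Statement : Type
  | form : Formula → Statement
  | conjL : Statement  -- the symbolic attack ∧_L
  | conjR : Statement  -- the symbolic attack ∧_R
  | question : Statement   -- the symbolic attack ?
  deriving DecidableEq, Inhabited

/-- A formula is atomic iff it is an atom. -/
def Formula.isAtomic : Formula → Prop
  | .atom _ => True
  | _ => False

/-- A move of a dialogue: a statement together with a reference.  The reference is
`none` for the initial move, `some (m, true)` for an attack on the assertion made at
move `m`, and `some (m, false)` for a defense against the attack made at move `m`. -/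
structure Move : Type where
  stmt : Statement
  ref : Option (ℕ × Bool)
  deriving DecidableEq, Inhabited

/-! ## Particle rules -/

/-- Particle rules, attacks: `Attacks a φ` holds when the statement `a` is an
admissible attack against the assertion `φ`. -/
inductive Attacks : Statement → Formula → Prop
  | conjL (φ ψ : Formula) : Attacks .conjL (.conj φ ψ)
  | conjR (φ ψ : Formula) : Attacks .conjR (.conj φ ψ)
  | disj (φ ψ : Formula) : Attacks .question (.disj φ ψ)
  | impl (φ ψ : Formula) : Attacks (.form φ) (.impl φ ψ)
  | neg (φ : Formula) : Attacks (.form φ) (.neg φ)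

/-- Particle rules, defenses: `Defends s a φ` holds when the statement `s` is an
admissible defense of the assertion `φ` against the attack `a`.  (A negation admits
no defense.) -/
inductive Defends : Statement → Statement → Formula → Prop
  | conjL (φ ψ : Formula) : Defends (.form φ) .conjL (.conj φ ψ)
  | conjR (φ ψ : Formula) : Defends (.form ψ) .conjR (.conj φ ψ)
  | disjL (φ ψ : Formula) : Defends (.form φ) .question (.disj φ ψ)
  | disjR (φ ψ : Formula) : Defends (.form ψ) .question (.disj φ ψ)
  | impl (φ ψ : Formula) : Defends (.form ψ) (.form φ) (.impl φ ψ)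

/-! ## Dialogues

A (finite stage of a) dialogue is modelled as a list of moves; the move at index `i`
is the `i`-th move, made by Proponent P if `i` is even and by Opponent O if `i` is odd. -/

/-- The skeletal dialogue conditions: move 0 is an assertion of a formula with no
reference, and every later move is an attack on, or a defense against, a specified
earlier move of the other player, in accordance with the particle rules; only
non-atomic assertions may be attacked. -/
def IsDialogue (d : List Move) : Prop :=
  (∀ _ : 0 < d.length, d[0]!.ref = none ∧ ∃ φ : Formula, d[0]!.stmt = .form φ) ∧
  (∀ i : ℕ, 0 < i → i < d.length →
    ∃ (m : ℕ) (z : Bool), d[i]!.ref = some (m, z) ∧ m < i ∧ m % 2 ≠ i % 2 ∧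
      (z = true →
        ∃ φ : Formula, d[m]!.stmt = .form φ ∧ ¬ φ.isAtomic ∧ Attacks d[i]!.stmt φ) ∧
      (z = false →
        ∃ (k : ℕ) (φ : Formula), d[m]!.ref = some (k, true) ∧ k < m ∧
          d[k]!.stmt = .form φ ∧ Defends d[i]!.stmt d[m]!.stmt φ))

/-- Rule D10: P may assert an atomic formula only if O has asserted it earlier. -/
def RuleD10 (d : List Move) : Prop :=
  ∀ i < d.length, i % 2 = 0 → ∀ a : ℕ, d[i]!.stmt = .form (.atom a) →
    ∃ j < i, j % 2 = 1 ∧ d[j]!.stmt = .form (.atom a)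

/-- Rule D13: each P-assertion may be attacked at most once. -/
def RuleD13 (d : List Move) : Prop :=
  ∀ m : ℕ, m % 2 = 0 → ∀ i < d.length, ∀ j < d.length,
    d[i]!.ref = some (m, true) → d[j]!.ref = some (m, true) → i = j

/-- Rule E: O may only react (attack or defend) against the immediately preceding
P-move. -/
def RuleE (d : List Move) : Prop :=
  ∀ i < d.length, i % 2 = 1 → ∃ z : Bool, d[i]!.ref = some (i - 1, z)

/-- The rule set N = {D10, D13}. -/
def NRules (d : List Move) : Prop := RuleD10 d ∧ RuleD13 d

/-- The rule set CL = {D10, D13, E}. -/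
def CLRules (d : List Move) : Prop := RuleD10 d ∧ RuleD13 d ∧ RuleE d

/-- A dialogue commences with `φ` when its initial move is P's assertion of `φ`. -/
def CommencesWith (φ : Formula) (d : List Move) : Prop :=
  0 < d.length ∧ d[0]!.stmt = .form φ

/-- An `S`-dialogue for `φ` (for a rule set `S`): a dialogue commencing with `φ`
that obeys the structural rules `S`.  These are exactly the branches (identified
with their underlying move sequences) of the `S`-dialogue tree for `φ`. -/
def SDialogueFor (S : List Move → Prop) (φ : Formula) (d : List Move) : Prop :=
  IsDialogue d ∧ S d ∧ CommencesWith φ d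

/-- P wins a finite `S`-dialogue for `φ`: it ends with a P-move (the last index,
`d.length - 1`, is even, i.e. `d.length` is odd) and it cannot be extended by any
legal further (O-)move. -/
def WinsFor (S : List Move → Prop) (φ : Formula) (d : List Move) : Prop :=
  SDialogueFor S φ d ∧ d.length % 2 = 1 ∧ ∀ m : Move, ¬ SDialogueFor S φ (d ++ [m])

/-- An `S`-winning strategy for P for `φ`, modelled as a set `T` of `S`-dialogues for
`φ`: the nodes of a rooted subtree of the `S`-dialogue tree for `φ`, each node being
identified with the dialogue leading from the root to it.  The conditions state that
`T` is a nonempty, prefix-closed set of `S`-dialogues for `φ` (hence a rooted subtree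
of the `S`-dialogue tree with the same root), that every branch of `T` is a finite
`S`-dialogue won by P (leaves are wins for P, and there is no infinite branch), that
every node at odd depth (an O-move) has exactly one child, and that every node at
even depth (a P-move) has the same children in `T` as in the full dialogue tree. -/
structure IsWinningStrategy (S : List Move → Prop) (φ : Formula) (T : Set (List Move)) : Prop where
  nonempty : T.Nonempty
  dialogues : ∀ d ∈ T, SDialogueFor S φ d
  prefix_closed : ∀ d ∈ T, ∀ e : List Move, e <+: d → 0 < e.length → e ∈ T
  leaf_wins : ∀ d ∈ T, (∀ m : Move, d ++ [m] ∉ T) → WinsFor S φ d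
  no_infinite_branch : ∀ f : ℕ → Move, ∃ n : ℕ, 0 < n ∧ (List.ofFn fun i : Fin n => f i) ∉ T
  odd_unique_child : ∀ d ∈ T, 0 < d.length → d.length % 2 = 0 → ∃! m : Move, d ++ [m] ∈ T
  even_all_children : ∀ d ∈ T, d.length % 2 = 1 →
    ∀ m : Move, SDialogueFor S φ (d ++ [m]) → d ++ [m] ∈ T

/-- `φ` is `S`-valid iff P has an `S`-winning strategy for `φ`. -/
def SValid (S : List Move → Prop) (φ : Formula) : Prop :=
  ∃ T : Set (List Move), IsWinningStrategy S φ T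

/-- `φ` is N-valid (`⊨_N φ`) iff P has an N-winning strategy for `φ`. -/
def NValid (φ : Formula) : Prop := SValid NRules φ

/-- Legality of extending a nonempty N-dialogue `d` by the move `m`. -/
def Legal (d : List Move) (m : Move) : Prop :=
  ∃ (k : ℕ) (z : Bool), m.ref = some (k, z) ∧ k < d.length ∧ k % 2 ≠ d.length % 2 ∧
    (z = true → ∃ φ : Formula, d[k]!.stmt = .form φ ∧ ¬ φ.isAtomic ∧ Attacks m.stmt φ) ∧
    (z = false → ∃ (l : ℕ) (φ : Formula), d[k]!.ref = some (l, true) ∧ l < k ∧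
          d[l]!.stmt = .form φ ∧ Defends m.stmt d[k]!.stmt φ) ∧
    (d.length % 2 = 0 → ∀ a : ℕ, m.stmt = .form (.atom a) →
      ∃ j < d.length, j % 2 = 1 ∧ d[j]!.stmt = .form (.atom a)) ∧
    (z = true → k % 2 = 0 → ∀ i < d.length, d[i]!.ref ≠ some (k, true))

theorem get_append_lt (d : List Move) (m : Move) (i : ℕ) (h : i < d.length) :
    (d ++ [m])[i]! = d[i]! := by
  grind

theorem get_append_len (d : List Move) (m : Move) :
    (d ++ [m])[d.length]! = m := by
  grind

theorem SD_append_iff (φ : Formula) (d : List Move) (m : Move) (hd : 0 < d.length) :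
    SDialogueFor NRules φ (d ++ [m]) ↔ SDialogueFor NRules φ d ∧ Legal d m := by
  have hl : (d ++ [m]).length = d.length + 1 := by simp
  have g1 := get_append_lt d m
  have g2 := get_append_len d m
  constructor
  · rintro ⟨⟨h0, h1⟩, ⟨h10, h13⟩, hc0, hc⟩
    rw [hl] at h0 h1
    unfold RuleD10 at h10
    unfold RuleD13 at h13
    rw [hl] at h10 h13
    refine ⟨⟨⟨?_, ?_⟩, ⟨?_, ?_⟩, hd, by rw [← g1 0 hd]; exact hc⟩, ?_⟩
    · intro _
      rw [← g1 0 hd]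
      exact h0 (by omega)
    · intro i hi hi'
      obtain ⟨k, z, e, hk, hp, ha, hde⟩ := h1 i hi (by omega)
      rw [g1 i hi'] at e ha hde
      rw [g1 k (by omega)] at ha hde
      refine ⟨k, z, e, hk, hp, ha, ?_⟩
      intro hz
      obtain ⟨l, ψ, e1, e2, e3, e4⟩ := hde hz
      rw [g1 l (by omega)] at e3
      exact ⟨l, ψ, e1, e2, e3, e4⟩
    · intro i hi hp a ha
      obtain ⟨j, hj, hj', e⟩ := h10 i (by omega) hp a (by rw [g1 i hi]; exact ha)
      rw [g1 j (by omega)] at e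
      exact ⟨j, hj, hj', e⟩
    · intro k hk i hi j hj e1 e2
      exact h13 k hk i (by omega) j (by omega) (by rw [g1 i hi]; exact e1)
        (by rw [g1 j hj]; exact e2)
    · obtain ⟨k, z, e, hk, hp, ha, hde⟩ := h1 d.length hd (by omega)
      rw [g2] at e ha hde
      rw [g1 k (by omega)] at ha hde
      refine ⟨k, z, e, hk, hp, ha, ?_, ?_, ?_⟩
      · intro hz
        obtain ⟨l, ψ, e1, e2, e3, e4⟩ := hde hz
        rw [g1 l (by omega)] at e3
        exact ⟨l, ψ, e1, e2, e3, e4⟩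
      · intro hp a ha
        obtain ⟨j, hj, hj', e⟩ := h10 d.length (by omega) hp a (by rw [g2]; exact ha)
        rw [g1 j (by omega)] at e
        exact ⟨j, hj, hj', e⟩
      · intro hz hk i hi e1
        have := h13 k hk i (by omega) d.length (by omega) (by rw [g1 i hi]; exact e1)
          (by rw [g2, e, hz])
        omega
  · rintro ⟨⟨⟨h0, h1⟩, ⟨h10, h13⟩, hc0, hc⟩, k, z, e, hk, hp, ha, hde, hat, hatt⟩
    refine ⟨⟨?_, ?_⟩, ⟨?_, ?_⟩, by omega, by rw [g1 0 hd]; exact hc⟩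
    · intro _
      rw [g1 0 hd]
      exact h0 hd
    · intro i hi hi'
      rcases Nat.lt_or_ge i d.length with h | h
      · obtain ⟨k, z, e, hk, hp, ha, hde⟩ := h1 i hi h
        rw [g1 i h]
        refine ⟨k, z, e, hk, hp, ?_⟩
        rw [g1 k (by omega)]
        refine ⟨ha, ?_⟩
        intro hz
        obtain ⟨l, ψ, e1, e2, e3, e4⟩ := hde hz
        exact ⟨l, ψ, e1, e2, by rw [g1 l (by omega)]; exact e3, e4⟩
      · have : i = d.length := by omega
        subst this
        rw [g2]
        refine ⟨k, z, e, hk, hp, ?_⟩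
        rw [g1 k hk]
        refine ⟨ha, ?_⟩
        intro hz
        obtain ⟨l, ψ, e1, e2, e3, e4⟩ := hde hz
        exact ⟨l, ψ, e1, e2, by rw [g1 l (by omega)]; exact e3, e4⟩
    · intro i hi hp a ha
      rcases Nat.lt_or_ge i d.length with h | h
      · rw [g1 i h] at ha
        obtain ⟨j, hj, hj', e⟩ := h10 i h hp a ha
        exact ⟨j, hj, hj', by rw [g1 j (by omega)]; exact e⟩
      · have : i = d.length := by omega
        subst this
        rw [g2] at ha
        obtain ⟨j, hj, hj', e⟩ := hat hp a ha
        exact ⟨j, hj, hj', by rw [g1 j (by omega)]; exact e⟩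
    · intro n hn i hi j hj e1 e2
      rcases Nat.lt_or_ge i d.length with h | h <;> rcases Nat.lt_or_ge j d.length with h' | h'
      · rw [g1 i h] at e1
        rw [g1 j h'] at e2
        exact h13 n hn i h j h' e1 e2
      · have : j = d.length := by omega
        subst this
        rw [g1 i h] at e1
        rw [g2, e] at e2
        simp only [Option.some.injEq, Prod.mk.injEq] at e2
        obtain ⟨rfl, rfl⟩ := e2
        exact absurd e1 (hatt rfl hn i h)
      · have : i = d.length := by omega
        subst this
        rw [g1 j h'] at e2
        rw [g2, e] at e1
        simp only [Option.some.injEq, Prod.mk.injEq] at e1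
        obtain ⟨rfl, rfl⟩ := e1
        exact absurd e2 (hatt rfl hn j h')
      · omega

/-- `Win d`: P, having just moved, can force a win from `d`, without the
dialogue ever getting longer than nine moves. -/
inductive Win : List Move → Prop
  | mk (d : List Move) (g : Move → Move) (h0 : d.length ≤ 9)
      (h1 : ∀ m, Legal d m → Legal (d ++ [m]) (g m))
      (h2 : ∀ m, Legal d m → Win (d ++ [m] ++ [g m])) : Win d

theorem Win.step (d : List Move) (h0 : d.length ≤ 9)
    (h : ∀ m, Legal d m → ∃ m', Legal (d ++ [m]) m' ∧ Win (d ++ [m] ++ [m'])) : Win d := by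
  classical
  refine Win.mk d (fun m => if hm : Legal d m then (h m hm).choose else m) h0 ?_ ?_
  · intro m hm
    simp only [hm, dif_pos]
    exact (h m hm).choose_spec.1
  · intro m hm
    simp only [hm, dif_pos]
    exact (h m hm).choose_spec.2

theorem Win.out {d : List Move} (h : Win d) (m : Move) (hm : Legal d m) :
    ∃ m', Legal (d ++ [m]) m' ∧ Win (d ++ [m] ++ [m']) := by
  cases h with
  | mk _ g h0 h1 h2 => exact ⟨g m, h1 m hm, h2 m hm⟩

/-- The chosen reply of P to the dialogue `d` (ending with an O-move). -/
noncomputable def reply (d : List Move) : Move :=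
  Classical.epsilon fun m' => Legal d m' ∧ Win (d ++ [m'])

theorem reply_spec {d : List Move} (h : Win d) (m : Move) (hm : Legal d m) :
    Legal (d ++ [m]) (reply (d ++ [m])) ∧ Win (d ++ [m] ++ [reply (d ++ [m])]) :=
  Classical.epsilon_spec (h.out m hm)

/-- Dialogues following the chosen replies. -/
inductive PTree (r : Move) : List Move → Prop
  | root : PTree r [r]
  | opp (d : List Move) (m : Move) (hd : PTree r d) (hp : d.length % 2 = 1) (hm : Legal d m) :
      PTree r (d ++ [m])
  | prop (d : List Move) (hd : PTree r d) (hp : d.length % 2 = 0) : PTree r (d ++ [reply d])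

theorem PTree.pos {r : Move} {d : List Move} (h : PTree r d) : 0 < d.length := by
  cases h <;> simp

theorem PTree.snoc {r : Move} {d : List Move} {m : Move} (hd : 0 < d.length)
    (h : PTree r (d ++ [m])) :
    PTree r d ∧ (d.length % 2 = 1 → Legal d m) ∧ (d.length % 2 = 0 → m = reply d) := by
  generalize he : d ++ [m] = e at h
  cases h with
  | root =>
    have := congrArg List.length he
    simp at this
    subst this
    simp at hd
  | opp d' m' hd' hp hm =>
    obtain ⟨rfl, h2⟩ := List.append_inj' he rfl
    simp at h2
    subst h2
    exact ⟨hd', fun _ => hm, fun h => by omega⟩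
  | prop d' hd' hp =>
    obtain ⟨rfl, h2⟩ := List.append_inj' he rfl
    simp at h2
    exact ⟨hd', fun h => by omega, fun _ => h2⟩

theorem PTree.inv {r : Move} (hr : Win [r]) {d : List Move} (h : PTree r d) :
    (d.length % 2 = 1 → Win d) ∧
    (d.length % 2 = 0 → Legal d (reply d) ∧ Win (d ++ [reply d])) := by
  induction h with
  | root => exact ⟨fun _ => hr, fun h => by simp at h⟩
  | opp d m hd hp hm ih =>
    refine ⟨fun h => ?_, fun _ => reply_spec (ih.1 hp) m hm⟩
    simp at h
    omega
  | prop d hd hp ih =>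
    refine ⟨fun _ => (ih.2 hp).2, fun h => ?_⟩
    simp at h
    omega

theorem PTree.sd {φ : Formula} {r : Move} (hr : Win [r]) (h0 : SDialogueFor NRules φ [r])
    {d : List Move} (h : PTree r d) : SDialogueFor NRules φ d := by
  induction h with
  | root => exact h0
  | opp d m hd hp hm ih => exact (SD_append_iff φ d m hd.pos).2 ⟨ih, hm⟩
  | prop d hd hp ih => exact (SD_append_iff φ d _ hd.pos).2 ⟨ih, ((hd.inv hr).2 hp).1⟩

theorem Win.len {d : List Move} (h : Win d) : d.length ≤ 9 := by
  cases h with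
  | mk _ g h0 h1 h2 => exact h0

theorem valid_of_win (φ : Formula) (hφ : ¬ φ.isAtomic) (hw : Win [⟨.form φ, none⟩]) :
    NValid φ := by
  have h0 : SDialogueFor NRules φ [⟨.form φ, none⟩] := by
    refine ⟨⟨?_, ?_⟩, ⟨?_, ?_⟩, ?_⟩
    · intro _
      simp
    · intro i hi hi'
      simp at hi'
      omega
    · intro i hi hp a ha
      simp at hi
      subst hi
      simp at ha
      subst ha
      exact absurd trivial hφ
    · intro m hm i hi j hj _ _
      simp at hi hj
      omega
    · simp [CommencesWith]
  have hch : ∀ d, PTree ⟨.form φ, none⟩ d → d.length % 2 = 1 →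
    ∀ m : Move, SDialogueFor NRules φ (d ++ [m]) → PTree ⟨.form φ, none⟩ (d ++ [m]) := by
    intro d hd hp m hm
    exact PTree.opp d m hd hp ((SD_append_iff φ d m hd.pos).1 hm).2
  refine ⟨{d | PTree ⟨.form φ, none⟩ d}, ⟨⟨_, PTree.root⟩, ?_, ?_, ?_, ?_, ?_, hch⟩⟩
  · intro d hd
    exact PTree.sd hw h0 hd
  · intro d hd e
    induction d using List.reverseRecOn with
    | nil =>
      intro he hpos
      simp at he
      subst he
      simp at hpos
    | append_singleton d m ih =>
      intro he hpos
      rcases List.prefix_concat_iff.1 he with h | h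
      · rw [h]
        exact hd
      · have : 0 < d.length := lt_of_lt_of_le hpos h.length_le
        exact ih (PTree.snoc this hd).1 h hpos
  · intro d hd hl
    refine ⟨PTree.sd hw h0 hd, ?_, ?_⟩
    · by_contra hp
      exact hl _ (PTree.prop d hd (by omega))
    · intro m hm
      by_cases hp : d.length % 2 = 1
      · exact hl m (hch d hd hp m hm)
      · exact hl _ (PTree.prop d hd (by omega))
  · intro f
    refine ⟨11, by omega, fun h => ?_⟩
    have := ((PTree.inv hw h).1 (by simp)).len
    simp at this
  · intro d hd hpos hp
    refine ⟨reply d, PTree.prop d hd hp, ?_⟩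
    intro m hm
    exact (PTree.snoc hpos hm).2.2 hp

/-- All attacks on a formula. -/
def attackList : Formula → List Statement
  | .atom _ => []
  | .neg φ => [.form φ]
  | .conj _ _ => [.conjL, .conjR]
  | .disj _ _ => [.question]
  | .impl φ _ => [.form φ]

/-- All defenses of a formula against an attack. -/
def defenseList : Statement → Formula → List Statement
  | .conjL, .conj φ _ => [.form φ]
  | .conjR, .conj _ ψ => [.form ψ]
  | .question, .disj φ ψ => [.form φ, .form ψ]
  | .form _, .impl _ ψ => [.form ψ]
  | _, _ => []

/-- The attacks of O on move `k` of `d`. -/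
def oAttacks (d : List Move) (k : ℕ) : List Move :=
  match d[k]!.stmt with
  | .form φ =>
    bif d.any (fun m => decide (m.ref = some (k, true))) then []
    else (attackList φ).map fun s => ⟨s, some (k, true)⟩
  | _ => []

/-- The defenses of O against move `k` of `d`. -/
def oDefenses (d : List Move) (k : ℕ) : List Move :=
  match d[k]!.ref with
  | some (l, true) =>
    match d[l]!.stmt with
    | .form φ => (defenseList d[k]!.stmt φ).map fun s => ⟨s, some (k, false)⟩
    | _ => []
  | _ => []

/-- The candidate moves of O in the position `d`. -/
def oMoves (d : List Move) : List Move :=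
  (List.range d.length).flatMap fun k =>
    bif k % 2 == 0 then oAttacks d k ++ oDefenses d k else []

theorem mem_oMoves {d : List Move} (hd : d.length % 2 = 1) {m : Move} (h : Legal d m) :
    m ∈ oMoves d := by
  obtain ⟨s, r⟩ := m
  obtain ⟨k, z, hr, hk, hp, ha, hde, -, hatt⟩ := h
  simp only at hr ha hde
  subst hr
  have hk2 : k % 2 = 0 := by omega
  simp only [oMoves, List.mem_flatMap, List.mem_range]
  refine ⟨k, hk, ?_⟩
  rw [hk2]
  simp only [beq_self_eq_true, cond_true, List.mem_append]
  cases z with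
  | true =>
    left
    obtain ⟨φ, h1, h2, h3⟩ := ha rfl
    have hany : d.any (fun m => decide (m.ref = some (k, true))) = false := by
      rw [List.any_eq_false]
      intro x hx
      obtain ⟨i, hi, rfl⟩ := List.mem_iff_getElem.1 hx
      have := hatt rfl hk2 i hi
      simpa [hi] using this
    unfold oAttacks
    rw [h1]
    simp only [hany, cond_false]
    cases h3 <;> simp [attackList]
  | false =>
    right
    obtain ⟨l, φ, h1, h2, h3, h4⟩ := hde rfl
    unfold oDefenses
    rw [h1]
    simp only [h3]
    generalize d[k]!.stmt = t at h4
    cases h4 <;> simp [defenseList]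

theorem Win.fin (d : List Move) (h0 : d.length ≤ 9) (h1 : d.length % 2 = 1)
    (h : oMoves d = []) : Win d := by
  refine Win.step d h0 fun m hm => ?_
  have := mem_oMoves h1 hm
  simp [h] at this

theorem Win.one (d : List Move) (m m' : Move) (h0 : d.length ≤ 9) (h1 : d.length % 2 = 1)
    (h : oMoves d = [m]) (hl : Legal (d ++ [m]) m') (hw : Win (d ++ [m] ++ [m'])) : Win d := by
  refine Win.step d h0 fun n hn => ?_
  have := mem_oMoves h1 hn
  rw [h, List.mem_singleton] at this
  subst this
  exact ⟨m', hl, hw⟩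

theorem Win.two (d : List Move) (m n m' n' : Move) (h0 : d.length ≤ 9) (h1 : d.length % 2 = 1)
    (h : oMoves d = [m, n]) (hl : Legal (d ++ [m]) m') (hw : Win (d ++ [m] ++ [m']))
    (hl' : Legal (d ++ [n]) n') (hw' : Win (d ++ [n] ++ [n'])) : Win d := by
  refine Win.step d h0 fun x hx => ?_
  have := mem_oMoves h1 hx
  rw [h] at this
  simp only [List.mem_cons, List.not_mem_nil, or_false] at this
  rcases this with rfl | rfl
  · exact ⟨m', hl, hw⟩
  · exact ⟨n', hl', hw'⟩

/-- P may state `s`: it is not atomic, or O has stated it before. -/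
def MaySay (d : List Move) (s : Statement) : Prop :=
  ∃ j < d.length, j % 2 = 1 ∧ d[j]!.stmt = s

/-- `s` is not an atom. -/
def NonAtom (s : Statement) : Prop := ∀ a, s ≠ .form (.atom a)

theorem Legal.att (d : List Move) (s : Statement) (k : ℕ) (φ : Formula) (hk : k < d.length)
    (hp : d.length % 2 = 0) (hk1 : k % 2 = 1) (e : d[k]!.stmt = .form φ) (ha : Attacks s φ)
    (hs : NonAtom s ∨ MaySay d s) : Legal d ⟨s, some (k, true)⟩ := by
  refine ⟨k, true, rfl, hk, by omega, fun _ => ⟨φ, e, ?_, ha⟩, by simp, ?_, fun _ h => by omega⟩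
  · cases ha <;> simp [Formula.isAtomic]
  · intro _ a h
    simp only at h
    subst h
    rcases hs with h | h
    · exact absurd rfl (h a)
    · exact h

theorem Legal.dfn (d : List Move) (s : Statement) (k l : ℕ) (φ : Formula) (hk : k < d.length)
    (hp : d.length % 2 = 0) (hk1 : k % 2 = 1) (e : d[k]!.ref = some (l, true)) (hl : l < k)
    (e' : d[l]!.stmt = .form φ) (ha : Defends s d[k]!.stmt φ)
    (hs : NonAtom s ∨ MaySay d s) : Legal d ⟨s, some (k, false)⟩ := by
  refine ⟨k, false, rfl, hk, by omega, by simp, fun _ => ⟨l, φ, e, hl, e', ha⟩, ?_, by simp⟩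
  intro _ a h
  simp only at h
  subst h
  rcases hs with h | h
  · exact absurd rfl (h a)
  · exact h

theorem valid_1 (p : ℕ) : NValid (.impl (.neg (.neg (.atom p))) (.atom p)) := by
  refine valid_of_win _ (fun h => h) ?_
  refine Win.one _ ⟨(.form (.neg (.neg (.atom p)))), some (0, true)⟩ ⟨(.form (.neg (.atom p))), some (1, true)⟩
    (by simp) (by simp) (by simp [oMoves, oAttacks, oDefenses, attackList, defenseList, List.range_succ])
    (Legal.att _ _ 1 _ (by simp) (by simp) (by simp) (by simp; try rfl) (by constructor) (.inl (by intro a h; cases h))) ?_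
  refine Win.one _ ⟨(.form (.atom p)), some (2, true)⟩ ⟨(.form (.atom p)), some (1, false)⟩
    (by simp) (by simp) (by simp [oMoves, oAttacks, oDefenses, attackList, defenseList, List.range_succ])
    (Legal.dfn _ _ 1 0 _ (by simp) (by simp) (by simp) (by simp; try rfl) (by simp) rfl (by constructor) (.inr ⟨3, by simp, rfl, rfl⟩)) ?_
  exact Win.fin _ (by simp) (by simp) (by simp [oMoves, oAttacks, oDefenses, attackList, defenseList, List.range_succ])

theorem valid_2 (p : ℕ) : NValid (.impl (.atom p) (.neg (.neg (.atom p)))) := by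
  refine valid_of_win _ (fun h => h) ?_
  refine Win.one _ ⟨(.form (.atom p)), some (0, true)⟩ ⟨(.form (.neg (.neg (.atom p)))), some (1, false)⟩
    (by simp) (by simp) (by simp [oMoves, oAttacks, oDefenses, attackList, defenseList, List.range_succ])
    (Legal.dfn _ _ 1 0 _ (by simp) (by simp) (by simp) (by simp; try rfl) (by simp) rfl (by constructor) (.inl (by intro a h; cases h))) ?_
  refine Win.one _ ⟨(.form (.neg (.atom p))), some (2, true)⟩ ⟨(.form (.atom p)), some (3, true)⟩
    (by simp) (by simp) (by simp [oMoves, oAttacks, oDefenses, attackList, defenseList, List.range_succ])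
    (Legal.att _ _ 3 _ (by simp) (by simp) (by simp) (by simp; try rfl) (by constructor) (.inr ⟨1, by simp, rfl, rfl⟩)) ?_
  exact Win.fin _ (by simp) (by simp) (by simp [oMoves, oAttacks, oDefenses, attackList, defenseList, List.range_succ])

theorem valid_3 (p : ℕ) : NValid (.disj (.neg (.atom p)) (.neg (.neg (.atom p)))) := by
  refine valid_of_win _ (fun h => h) ?_
  refine Win.one _ ⟨.question, some (0, true)⟩ ⟨(.form (.neg (.atom p))), some (1, false)⟩
    (by simp) (by simp) (by simp [oMoves, oAttacks, oDefenses, attackList, defenseList, List.range_succ])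
    (Legal.dfn _ _ 1 0 _ (by simp) (by simp) (by simp) (by simp; try rfl) (by simp) rfl (by constructor) (.inl (by intro a h; cases h))) ?_
  refine Win.one _ ⟨(.form (.atom p)), some (2, true)⟩ ⟨(.form (.neg (.neg (.atom p)))), some (1, false)⟩
    (by simp) (by simp) (by simp [oMoves, oAttacks, oDefenses, attackList, defenseList, List.range_succ])
    (Legal.dfn _ _ 1 0 _ (by simp) (by simp) (by simp) (by simp; try rfl) (by simp) rfl (by constructor) (.inl (by intro a h; cases h))) ?_
  refine Win.one _ ⟨(.form (.neg (.atom p))), some (4, true)⟩ ⟨(.form (.atom p)), some (5, true)⟩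
    (by simp) (by simp) (by simp [oMoves, oAttacks, oDefenses, attackList, defenseList, List.range_succ])
    (Legal.att _ _ 5 _ (by simp) (by simp) (by simp) (by simp; try rfl) (by constructor) (.inr ⟨3, by simp, rfl, rfl⟩)) ?_
  exact Win.fin _ (by simp) (by simp) (by simp [oMoves, oAttacks, oDefenses, attackList, defenseList, List.range_succ])

theorem valid_4 (p q : ℕ) : NValid (.disj (.impl (.atom p) (.atom q)) (.impl (.atom q) (.atom p))) := by
  refine valid_of_win _ (fun h => h) ?_
  refine Win.one _ ⟨.question, some (0, true)⟩ ⟨(.form (.impl (.atom p) (.atom q))), some (1, false)⟩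
    (by simp) (by simp) (by simp [oMoves, oAttacks, oDefenses, attackList, defenseList, List.range_succ])
    (Legal.dfn _ _ 1 0 _ (by simp) (by simp) (by simp) (by simp; try rfl) (by simp) rfl (by constructor) (.inl (by intro a h; cases h))) ?_
  refine Win.one _ ⟨(.form (.atom p)), some (2, true)⟩ ⟨(.form (.impl (.atom q) (.atom p))), some (1, false)⟩
    (by simp) (by simp) (by simp [oMoves, oAttacks, oDefenses, attackList, defenseList, List.range_succ])
    (Legal.dfn _ _ 1 0 _ (by simp) (by simp) (by simp) (by simp; try rfl) (by simp) rfl (by constructor) (.inl (by intro a h; cases h))) ?_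
  refine Win.one _ ⟨(.form (.atom q)), some (4, true)⟩ ⟨(.form (.atom p)), some (5, false)⟩
    (by simp) (by simp) (by simp [oMoves, oAttacks, oDefenses, attackList, defenseList, List.range_succ])
    (Legal.dfn _ _ 5 4 _ (by simp) (by simp) (by simp) (by simp; try rfl) (by simp) rfl (by constructor) (.inr ⟨3, by simp, rfl, rfl⟩)) ?_
  exact Win.fin _ (by simp) (by simp) (by simp [oMoves, oAttacks, oDefenses, attackList, defenseList, List.range_succ])

theorem valid_5 (p q : ℕ) : NValid (.disj (.impl (.atom p) (.atom q)) (.impl (.atom p) (.neg (.atom q)))) := by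
  refine valid_of_win _ (fun h => h) ?_
  refine Win.one _ ⟨.question, some (0, true)⟩ ⟨(.form (.impl (.atom p) (.neg (.atom q)))), some (1, false)⟩
    (by simp) (by simp) (by simp [oMoves, oAttacks, oDefenses, attackList, defenseList, List.range_succ])
    (Legal.dfn _ _ 1 0 _ (by simp) (by simp) (by simp) (by simp; try rfl) (by simp) rfl (by constructor) (.inl (by intro a h; cases h))) ?_
  refine Win.one _ ⟨(.form (.atom p)), some (2, true)⟩ ⟨(.form (.neg (.atom q))), some (3, false)⟩
    (by simp) (by simp) (by simp [oMoves, oAttacks, oDefenses, attackList, defenseList, List.range_succ])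
    (Legal.dfn _ _ 3 2 _ (by simp) (by simp) (by simp) (by simp; try rfl) (by simp) rfl (by constructor) (.inl (by intro a h; cases h))) ?_
  refine Win.one _ ⟨(.form (.atom q)), some (4, true)⟩ ⟨(.form (.impl (.atom p) (.atom q))), some (1, false)⟩
    (by simp) (by simp) (by simp [oMoves, oAttacks, oDefenses, attackList, defenseList, List.range_succ])
    (Legal.dfn _ _ 1 0 _ (by simp) (by simp) (by simp) (by simp; try rfl) (by simp) rfl (by constructor) (.inl (by intro a h; cases h))) ?_
  refine Win.one _ ⟨(.form (.atom p)), some (6, true)⟩ ⟨(.form (.atom q)), some (7, false)⟩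
    (by simp) (by simp) (by simp [oMoves, oAttacks, oDefenses, attackList, defenseList, List.range_succ])
    (Legal.dfn _ _ 7 6 _ (by simp) (by simp) (by simp) (by simp; try rfl) (by simp) rfl (by constructor) (.inr ⟨5, by simp, rfl, rfl⟩)) ?_
  exact Win.fin _ (by simp) (by simp) (by simp [oMoves, oAttacks, oDefenses, attackList, defenseList, List.range_succ])

theorem valid_6 (p q : ℕ) : NValid (.impl (.neg (.atom p)) (.impl (.atom p) (.atom q))) := by
  refine valid_of_win _ (fun h => h) ?_
  refine Win.one _ ⟨(.form (.neg (.atom p))), some (0, true)⟩ ⟨(.form (.impl (.atom p) (.atom q))), some (1, false)⟩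
    (by simp) (by simp) (by simp [oMoves, oAttacks, oDefenses, attackList, defenseList, List.range_succ])
    (Legal.dfn _ _ 1 0 _ (by simp) (by simp) (by simp) (by simp; try rfl) (by simp) rfl (by constructor) (.inl (by intro a h; cases h))) ?_
  refine Win.one _ ⟨(.form (.atom p)), some (2, true)⟩ ⟨(.form (.atom p)), some (1, true)⟩
    (by simp) (by simp) (by simp [oMoves, oAttacks, oDefenses, attackList, defenseList, List.range_succ])
    (Legal.att _ _ 1 _ (by simp) (by simp) (by simp) (by simp; try rfl) (by constructor) (.inr ⟨3, by simp, rfl, rfl⟩)) ?_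
  exact Win.fin _ (by simp) (by simp) (by simp [oMoves, oAttacks, oDefenses, attackList, defenseList, List.range_succ])

theorem valid_7 (p q : ℕ) : NValid (.impl (.neg (.disj (.atom p) (.neg (.atom p)))) (.atom q)) := by
  refine valid_of_win _ (fun h => h) ?_
  refine Win.one _ ⟨(.form (.neg (.disj (.atom p) (.neg (.atom p))))), some (0, true)⟩ ⟨(.form (.disj (.atom p) (.neg (.atom p)))), some (1, true)⟩
    (by simp) (by simp) (by simp [oMoves, oAttacks, oDefenses, attackList, defenseList, List.range_succ])
    (Legal.att _ _ 1 _ (by simp) (by simp) (by simp) (by simp; try rfl) (by constructor) (.inl (by intro a h; cases h))) ?_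
  refine Win.one _ ⟨.question, some (2, true)⟩ ⟨(.form (.neg (.atom p))), some (3, false)⟩
    (by simp) (by simp) (by simp [oMoves, oAttacks, oDefenses, attackList, defenseList, List.range_succ])
    (Legal.dfn _ _ 3 2 _ (by simp) (by simp) (by simp) (by simp; try rfl) (by simp) rfl (by constructor) (.inl (by intro a h; cases h))) ?_
  refine Win.one _ ⟨(.form (.atom p)), some (4, true)⟩ ⟨(.form (.atom p)), some (3, false)⟩
    (by simp) (by simp) (by simp [oMoves, oAttacks, oDefenses, attackList, defenseList, List.range_succ])
    (Legal.dfn _ _ 3 2 _ (by simp) (by simp) (by simp) (by simp; try rfl) (by simp) rfl (by constructor) (.inr ⟨5, by simp, rfl, rfl⟩)) ?_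
  exact Win.fin _ (by simp) (by simp) (by simp [oMoves, oAttacks, oDefenses, attackList, defenseList, List.range_succ])

theorem valid_8 (p q : ℕ) : NValid (.impl (.atom p) (.disj (.atom p) (.atom q))) := by
  refine valid_of_win _ (fun h => h) ?_
  refine Win.one _ ⟨(.form (.atom p)), some (0, true)⟩ ⟨(.form (.disj (.atom p) (.atom q))), some (1, false)⟩
    (by simp) (by simp) (by simp [oMoves, oAttacks, oDefenses, attackList, defenseList, List.range_succ])
    (Legal.dfn _ _ 1 0 _ (by simp) (by simp) (by simp) (by simp; try rfl) (by simp) rfl (by constructor) (.inl (by intro a h; cases h))) ?_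
  refine Win.one _ ⟨.question, some (2, true)⟩ ⟨(.form (.atom p)), some (3, false)⟩
    (by simp) (by simp) (by simp [oMoves, oAttacks, oDefenses, attackList, defenseList, List.range_succ])
    (Legal.dfn _ _ 3 2 _ (by simp) (by simp) (by simp) (by simp; try rfl) (by simp) rfl (by constructor) (.inr ⟨1, by simp, rfl, rfl⟩)) ?_
  exact Win.fin _ (by simp) (by simp) (by simp [oMoves, oAttacks, oDefenses, attackList, defenseList, List.range_succ])

theorem valid_9 (p : ℕ) : NValid (.impl (.atom p) (.conj (.atom p) (.atom p))) := by
  refine valid_of_win _ (fun h => h) ?_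
  refine Win.one _ ⟨(.form (.atom p)), some (0, true)⟩ ⟨(.form (.conj (.atom p) (.atom p))), some (1, false)⟩
    (by simp) (by simp) (by simp [oMoves, oAttacks, oDefenses, attackList, defenseList, List.range_succ])
    (Legal.dfn _ _ 1 0 _ (by simp) (by simp) (by simp) (by simp; try rfl) (by simp) rfl (by constructor) (.inl (by intro a h; cases h))) ?_
  refine Win.two _ ⟨.conjL, some (2, true)⟩ ⟨.conjR, some (2, true)⟩
    ⟨(.form (.atom p)), some (3, false)⟩ ⟨(.form (.atom p)), some (3, false)⟩ (by simp) (by simp) (by simp [oMoves, oAttacks, oDefenses, attackList, defenseList, List.range_succ])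
    (Legal.dfn _ _ 3 2 _ (by simp) (by simp) (by simp) (by simp; try rfl) (by simp) rfl (by constructor) (.inr ⟨1, by simp, rfl, rfl⟩)) ?_
    (Legal.dfn _ _ 3 2 _ (by simp) (by simp) (by simp) (by simp; try rfl) (by simp) rfl (by constructor) (.inr ⟨1, by simp, rfl, rfl⟩)) ?_
  · exact Win.fin _ (by simp) (by simp) (by simp [oMoves, oAttacks, oDefenses, attackList, defenseList, List.range_succ])
  · exact Win.fin _ (by simp) (by simp) (by simp [oMoves, oAttacks, oDefenses, attackList, defenseList, List.range_succ])

/-- For distinct atoms `p` and `q`, the following formulas are all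
N-valid: `¬¬p → p`; `p → ¬¬p`; `¬p ∨ ¬¬p`; `(p → q) ∨ (q → p)`;
`(p → q) ∨ (p → ¬q)`; `¬p → (p → q)`; `¬(p ∨ ¬p) → q`; `p → (p ∨ q)`;
`p → (p ∧ p)`. -/
theorem sample_N_validities (p q : ℕ) (hpq : p ≠ q) :
    NValid (Formula.impl (Formula.neg (Formula.neg (Formula.atom p))) (Formula.atom p)) ∧
    NValid (Formula.impl (Formula.atom p) (Formula.neg (Formula.neg (Formula.atom p)))) ∧
    NValid (Formula.disj (Formula.neg (Formula.atom p))
        (Formula.neg (Formula.neg (Formula.atom p)))) ∧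
    NValid (Formula.disj (Formula.impl (Formula.atom p) (Formula.atom q))
        (Formula.impl (Formula.atom q) (Formula.atom p))) ∧
    NValid (Formula.disj (Formula.impl (Formula.atom p) (Formula.atom q))
        (Formula.impl (Formula.atom p) (Formula.neg (Formula.atom q)))) ∧
    NValid (Formula.impl (Formula.neg (Formula.atom p))
        (Formula.impl (Formula.atom p) (Formula.atom q))) ∧
    NValid (Formula.impl
        (Formula.neg (Formula.disj (Formula.atom p) (Formula.neg (Formula.atom p))))
        (Formula.atom q)) ∧
    NValid (Formula.impl (Formula.atom p) (Formula.disj (Formula.atom p) (Formula.atom q))) ∧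
    NValid (Formula.impl (Formula.atom p) (Formula.conj (Formula.atom p) (Formula.atom p))) := by
  exact ⟨valid_1 p, valid_2 p, valid_3 p, valid_4 p q, valid_5 p q, valid_6 p q, valid_7 p q,
    valid_8 p q, valid_9 p⟩
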